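/- Let Z = {P₁,…,P_s} be a finite set of distinct points of X = ℙ¹×ℙ¹ with radical ideal I, and suppose α⁺(I^{(m+1)}) = α⁺(I^{(m)}) + 2 for some m ≥ 1. Let F be a nonzero form of bidegree (p,q) belonging to I^{(m+1)} with p + q = α⁺(I^{(m+1)}). Then every irreducible factor of F is a form of bidegree (1,0), (0,1) or (1,1); moreover F has at most two distinct irreducible factors of bidegree (1,0) and at most two distinct irreducible factors of bidegree (0,1). -/

import Mathlib

open MvPolynomial

noncomputable section

/-- The bi-graded polynomial ring `ℂ[x₀,x₁,y₀,y₁]`: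
the first `Fin 2` summand indexes the variables `x₀,x₁`,
the second the variables `y₀,y₁`. -/
abbrev R4 : Type := MvPolynomial (Fin 2 ⊕ Fin 2) ℂ

/-- The weight function giving the bi-grading of `R4`. -/
def biWeight : Fin 2 ⊕ Fin 2 → ℕ × ℕ := Sum.elim (fun _ => (1, 0)) (fun _ => (0, 1))

/-- `F` is a (possibly zero) form of bidegree `(p,q)`, i.e. homogeneous of degree `p`
in `x₀,x₁` and homogeneous of degree `q` in `y₀,y₁`. -/
def IsBiForm (F : R4) (p q : ℕ) : Prop :=
  IsWeightedHomogeneous biWeight F (p, q)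

/-- The projective line `ℙ¹` over `ℂ`. -/
abbrev ProjLine := Projectivization ℂ (Fin 2 → ℂ)

/-- The bi-homogeneous prime ideal of a point `P = ([a:b],[c:d])` of `X = ℙ¹ × ℙ¹`,
generated by `b·x₀ - a·x₁` and `d·y₀ - c·y₁`. -/
def pointIdeal (P : ProjLine × ProjLine) : Ideal R4 :=
  Ideal.span
    { C (P.1.rep 1) * X (Sum.inl 0) - C (P.1.rep 0) * X (Sum.inl 1),
      C (P.2.rep 1) * X (Sum.inr 0) - C (P.2.rep 0) * X (Sum.inr 1) }

/-- The `m`-th symbolic power of the radical ideal of the finite set of points `Z ⊂ X`: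
`I^{(m)} = ⋂_{P ∈ Z} I(P)^m`.  For `m = 1` this is the radical ideal `I = I(Z)` itself. -/
def symbPow (Z : Finset (ProjLine × ProjLine)) (m : ℕ) : Ideal R4 :=
  ⨅ P ∈ Z, pointIdeal P ^ m

/-- `α*(J)`: the least `t ≥ 0` such that `J` contains a nonzero form of bidegree `(t,t)`. -/
def alphaStar (J : Ideal R4) : ℕ :=
  sInf {t : ℕ | ∃ F ∈ J, F ≠ 0 ∧ IsBiForm F t t}

/-- `α⁺(J)`: the least `d ≥ 0` such that `J` contains a nonzero form of bidegree `(p,q)`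
with `p + q = d`. -/
def alphaPlus (J : Ideal R4) : ℕ :=
  sInf {d : ℕ | ∃ p q : ℕ, p + q = d ∧ ∃ F ∈ J, F ≠ 0 ∧ IsBiForm F p q}

/-! Let a factor `G` of `F` be replaced by a form `K` whose multiplicity at each point of `Z` is at
least that of `G` minus one. Then the result still has multiplicity at least `m` along `Z`, so
`deg G - deg K ≤ deg F - α⁺(I^{(m)}) = 2`.

If `G` is irreducible of bidegree `(a, b)` with `a, b ≥ 1`, then Bézout's theorem on `ℙ¹ × ℙ¹`,
itself a dimension count, bounds the `δ`-invariant of `G`: the multiplicities `μ P` satisfy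
`∑ (μ P).choose 2 ≤ (a - 1) * (b - 1)`. If moreover `a + b ≥ 3`, there are thus enough forms of
bidegree `(a - 2, b - 1)` or `(a - 1, b - 2)` to find one with multiplicity at least `μ P - 1` at
every `P ∈ Z`, and `deg G - deg K = 3` is too much. If `G` is a product of three lines of the same
ruling, these do not meet and `K = 1` gives the same contradiction. -/

section WeightedHomogeneous

variable {σ R : Type*} [CommRing R]

/-- The substitution `X i ↦ X i * T ^ w i`, with `T` a new variable. It turns the grading by the
weight `w` into the grading by powers of `T`. -/
def weightExpansion (w : σ → ℕ) : MvPolynomial σ R →ₐ[R] Polynomial (MvPolynomial σ R) :=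
  aeval fun i => Polynomial.C (X i) * Polynomial.X ^ w i

lemma weightExpansion_monomial (w : σ → ℕ) (d : σ →₀ ℕ) (c : R) :
    weightExpansion w (monomial d c) =
      Polynomial.monomial (Finsupp.weight w d) (monomial d c) := by
  have hX : (d.prod fun i k => Polynomial.X ^ (w i * k) : Polynomial (MvPolynomial σ R)) =
      Polynomial.X ^ Finsupp.weight w d := by
    rw [Finsupp.weight_apply, Finsupp.sum, ← Finset.prod_pow_eq_pow_sum]
    exact Finset.prod_congr rfl fun i _ => by rw [smul_eq_mul, mul_comm]
  rw [weightExpansion, aeval_monomial, monomial_eq, ← Polynomial.C_mul_X_pow_eq_monomial, ← hX,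
    Polynomial.C_mul, Finsupp.prod, Finsupp.prod, Finsupp.prod, map_prod, mul_assoc,
    ← Finset.prod_mul_distrib, IsScalarTower.algebraMap_apply R (MvPolynomial σ R),
    Polynomial.algebraMap_eq, algebraMap_eq]
  simp only [mul_pow, ← pow_mul, map_pow]

lemma coeff_weightExpansion (w : σ → ℕ) (F : MvPolynomial σ R) (n : ℕ) :
    (weightExpansion w F).coeff n = weightedHomogeneousComponent w n F := by
  classical
  induction F using MvPolynomial.induction_on' with
  | monomial d c =>
    rw [weightExpansion_monomial, Polynomial.coeff_monomial]
    split_ifs with h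
    · exact ((isWeightedHomogeneous_monomial w d c h).weightedHomogeneousComponent_same).symm
    · exact ((isWeightedHomogeneous_monomial w d c rfl).weightedHomogeneousComponent_ne n
        (Ne.symm h)).symm
  | add F G hF hG => rw [map_add, Polynomial.coeff_add, hF, hG, map_add]

lemma weightExpansion_injective (w : σ → ℕ) :
    Function.Injective (weightExpansion w : MvPolynomial σ R → _) := by
  rw [injective_iff_map_eq_zero]
  intro F hF
  rw [← sum_weightedHomogeneousComponent w F]
  simp only [← coeff_weightExpansion, hF, Polynomial.coeff_zero, finsum_zero]

lemma weightExpansion_eq_monomial {w : σ → ℕ} {F : MvPolynomial σ R} {n : ℕ}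
    (hF : IsWeightedHomogeneous w F n) : weightExpansion w F = Polynomial.monomial n F := by
  ext1 k
  rw [coeff_weightExpansion, Polynomial.coeff_monomial]
  split_ifs with h
  · exact h ▸ hF.weightedHomogeneousComponent_same
  · exact hF.weightedHomogeneousComponent_ne k (Ne.symm h)

lemma isWeightedHomogeneous_of_natDegree_le_natTrailingDegree {w : σ → ℕ} {F : MvPolynomial σ R}
    (h : (weightExpansion w F).natDegree ≤ (weightExpansion w F).natTrailingDegree) :
    IsWeightedHomogeneous w F (weightExpansion w F).natDegree := by
  classical
  intro d hd
  have hcoeff : (weightExpansion w F).coeff (Finsupp.weight w d) ≠ 0 := fun h0 => hd <| by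
    simpa [coeff_weightExpansion, coeff_weightedHomogeneousComponent] using congrArg (coeff d) h0
  exact le_antisymm (Polynomial.le_natDegree_of_ne_zero hcoeff)
    (h.trans (Polynomial.natTrailingDegree_le_of_ne_zero hcoeff))

lemma exists_isWeightedHomogeneous_of_mul [IsDomain R] {w : σ → ℕ} {F G : MvPolynomial σ R} {n : ℕ}
    (h0 : F * G ≠ 0) (h : IsWeightedHomogeneous w (F * G) n) :
    ∃ i j, i + j = n ∧ IsWeightedHomogeneous w F i ∧ IsWeightedHomogeneous w G j := by
  have hF : weightExpansion w F ≠ 0 :=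
    (map_ne_zero_iff _ (weightExpansion_injective w)).2 (left_ne_zero_of_mul h0)
  have hG : weightExpansion w G ≠ 0 :=
    (map_ne_zero_iff _ (weightExpansion_injective w)).2 (right_ne_zero_of_mul h0)
  have hFG := weightExpansion_eq_monomial h
  rw [map_mul] at hFG
  have htop := congrArg Polynomial.natDegree hFG
  have hbot := congrArg Polynomial.natTrailingDegree hFG
  rw [Polynomial.natDegree_mul hF hG, Polynomial.natDegree_monomial_eq _ h0] at htop
  rw [Polynomial.natTrailingDegree_mul hF hG, Polynomial.natTrailingDegree_monomial h0] at hbot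
  have hFle := Polynomial.natTrailingDegree_le_natDegree (weightExpansion w F)
  have hGle := Polynomial.natTrailingDegree_le_natDegree (weightExpansion w G)
  exact ⟨_, _, htop, isWeightedHomogeneous_of_natDegree_le_natTrailingDegree (by lia),
    isWeightedHomogeneous_of_natDegree_le_natTrailingDegree (by lia)⟩

lemma isWeightedHomogeneous_bind₁ {M τ : Type*} [AddCommMonoid M] {w : σ → M} {w' : τ → M}
    {f : σ → MvPolynomial τ R} (hf : ∀ i, IsWeightedHomogeneous w' (f i) (w i))
    {F : MvPolynomial σ R} {n : M} (hF : IsWeightedHomogeneous w F n) :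
    IsWeightedHomogeneous w' (bind₁ f F) n := by
  rw [F.as_sum, map_sum]
  refine IsWeightedHomogeneous.sum _ _ _ fun d hd => ?_
  rw [bind₁_monomial, ← hF (mem_support_iff.1 hd), Finsupp.weight_apply]
  exact (IsWeightedHomogeneous.prod _ _ _ fun i _ => (hf i).pow _).C_mul _

end WeightedHomogeneous

section CoordinateIdeals

variable {σ R : Type*} [CommRing R]

lemma monomial_mem_span_X_pow (s : Set σ) (d : σ →₀ ℕ) :
    (monomial d 1 : MvPolynomial σ R) ∈
      Ideal.span (X '' s) ^ Finsupp.weight (s.indicator (1 : σ → ℕ)) d := by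
  classical
  induction d using Finsupp.induction_linear with
  | zero => simp
  | add d e hd he =>
    rw [map_add, pow_add, ← one_mul (1 : R), ← monomial_mul]
    exact Ideal.mul_mem_mul hd he
  | single i k =>
    rw [Finsupp.weight_single, ← X_pow_eq_monomial]
    by_cases hi : i ∈ s
    · simpa [hi] using Ideal.pow_mem_pow (Ideal.subset_span (Set.mem_image_of_mem X hi)) k
    · simp [hi]

lemma mem_span_X_pow_iff {s : Set σ} {n : ℕ} {F : MvPolynomial σ R} :
    F ∈ Ideal.span (X '' s) ^ n ↔
      n ≤ (F : MvPowerSeries σ R).weightedOrder (s.indicator (1 : σ → ℕ)) := by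
  constructor
  · intro h
    induction n generalizing F with
    | zero => simp
    | succ n ih =>
      rw [pow_succ] at h
      induction h using Submodule.mul_induction_on' with
      | mem_mul_mem G hG H hH =>
        rw [coe_mul, Nat.cast_add, Nat.cast_one]
        refine (add_le_add (ih hG) ?_).trans (MvPowerSeries.le_weightedOrder_mul _)
        refine MvPowerSeries.le_weightedOrder _ fun d hd => ?_
        rw [coeff_coe]
        by_contra hne
        obtain ⟨i, hi, hdi⟩ := mem_ideal_span_X_image.1 hH d (mem_support_iff.2 hne)
        have := Finsupp.le_weight (s.indicator (1 : σ → ℕ)) (s := i) (by simp [hi]) d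
        have : Finsupp.weight (s.indicator (1 : σ → ℕ)) d < 1 := by exact_mod_cast hd
        lia
      | add G _ H _ hG hH =>
        rw [coe_add]
        exact (le_min hG hH).trans (MvPowerSeries.min_weightedOrder_le_add _)
  · intro h
    rw [F.as_sum]
    refine Ideal.sum_mem _ fun d hd => ?_
    rw [← mul_one (coeff d F), ← C_mul_monomial]
    have hn := h.trans (MvPowerSeries.weightedOrder_le _ (by rwa [coeff_coe, ← mem_support_iff]))
    exact Ideal.mul_mem_left _ _
      (Ideal.pow_le_pow_right (by exact_mod_cast hn) (monomial_mem_span_X_pow s d))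

end CoordinateIdeals

section Bidegree

lemma weight_biWeight (d : Fin 2 ⊕ Fin 2 →₀ ℕ) :
    Finsupp.weight biWeight d = (d (.inl 0) + d (.inl 1), d (.inr 0) + d (.inr 1)) := by
  rw [Finsupp.weight_apply, Finsupp.sum_fintype _ _ (by simp)]
  simp [biWeight, Fintype.sum_sum_type, -nsmul_eq_mul]

lemma isBiForm_iff {F : R4} {p q : ℕ} :
    IsBiForm F p q ↔ IsWeightedHomogeneous (Prod.fst ∘ biWeight) F p ∧
      IsWeightedHomogeneous (Prod.snd ∘ biWeight) F q := by
  have hfst (d : Fin 2 ⊕ Fin 2 →₀ ℕ) :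
      Finsupp.weight (Prod.fst ∘ biWeight) d = (Finsupp.weight biWeight d).1 := by
    simp [Finsupp.weight_apply, Finsupp.sum, Prod.fst_sum]
  have hsnd (d : Fin 2 ⊕ Fin 2 →₀ ℕ) :
      Finsupp.weight (Prod.snd ∘ biWeight) d = (Finsupp.weight biWeight d).2 := by
    simp [Finsupp.weight_apply, Finsupp.sum, Prod.snd_sum]
  simp only [IsBiForm, IsWeightedHomogeneous, hfst, hsnd, Prod.ext_iff, ← forall_and]

lemma IsBiForm.mul {F G : R4} {a b c d : ℕ} (hF : IsBiForm F a b) (hG : IsBiForm G c d) :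
    IsBiForm (F * G) (a + c) (b + d) :=
  IsWeightedHomogeneous.mul hF hG

lemma IsBiForm.pow {F : R4} {a b : ℕ} (hF : IsBiForm F a b) (n : ℕ) :
    IsBiForm (F ^ n) (n * a) (n * b) := by
  simpa [IsBiForm] using IsWeightedHomogeneous.pow hF n

lemma IsBiForm.unique {F : R4} {a b c d : ℕ} (hF : IsBiForm F a b) (hF' : IsBiForm F c d)
    (h0 : F ≠ 0) : a = c ∧ b = d := by
  simpa using IsWeightedHomogeneous.inj_right h0 hF hF'

lemma IsBiForm.exists_of_mul {F G : R4} {p q : ℕ} (h : IsBiForm (F * G) p q) (h0 : F * G ≠ 0) :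
    ∃ a b c d, a + c = p ∧ b + d = q ∧ IsBiForm F a b ∧ IsBiForm G c d := by
  obtain ⟨hx, hy⟩ := isBiForm_iff.1 h
  obtain ⟨a, c, hac, hFx, hGx⟩ := exists_isWeightedHomogeneous_of_mul h0 hx
  obtain ⟨b, d, hbd, hFy, hGy⟩ := exists_isWeightedHomogeneous_of_mul h0 hy
  exact ⟨a, b, c, d, hac, hbd, isBiForm_iff.2 ⟨hFx, hFy⟩, isBiForm_iff.2 ⟨hGx, hGy⟩⟩

lemma IsBiForm.of_mul_left {F G : R4} {a b c d : ℕ} (hF : IsBiForm F a b)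
    (hFG : IsBiForm (F * G) (a + c) (b + d)) (hF0 : F ≠ 0) : IsBiForm G c d := by
  rcases eq_or_ne G 0 with rfl | hG0
  · exact isWeightedHomogeneous_zero _ _ _
  · obtain ⟨a', b', c', d', hac, hbd, hF', hG⟩ := hFG.exists_of_mul (mul_ne_zero hF0 hG0)
    obtain ⟨rfl, rfl⟩ := hF.unique hF' hF0
    rwa [Nat.add_left_cancel hac, Nat.add_left_cancel hbd] at hG

lemma IsBiForm.le_of_dvd {F G : R4} {a b c d : ℕ} (hG : IsBiForm G a b)
    (hF : IsBiForm F c d) (h0 : F ≠ 0) (hdvd : G ∣ F) : a ≤ c ∧ b ≤ d := by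
  obtain ⟨H, rfl⟩ := hdvd
  obtain ⟨a', b', c', d', hac, hbd, hG', -⟩ := hF.exists_of_mul h0
  obtain ⟨rfl, rfl⟩ := hG.unique hG' (left_ne_zero_of_mul h0)
  lia

lemma IsBiForm.isUnit {F : R4} (hF : IsBiForm F 0 0) (h0 : F ≠ 0) : IsUnit F := by
  have hw : ∀ i, biWeight i ≠ 0 := Sum.forall.2 ⟨by simp [biWeight], by simp [biWeight]⟩
  have hC : F = C (coeff 0 F) := by
    rw [← weightedHomogeneousComponent_zero F hw]
    exact (IsWeightedHomogeneous.weightedHomogeneousComponent_same hF).symm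
  rw [hC] at h0 ⊢
  exact (isUnit_iff_ne_zero.2 (C_ne_zero.1 h0)).map C

end Bidegree

section Exponents

/-- The exponent of the monomial `x₀ⁱ x₁ᵖ⁻ⁱ y₀ʲ y₁ᑫ⁻ʲ` of bidegree `(p, q)`, for `i ≤ p` and
`j ≤ q`. The order of vanishing of the monomial along `x₀ = y₀ = 0` is then `i + j`. -/
def biExponent (p q : ℕ) (ij : ℕ × ℕ) : Fin 2 ⊕ Fin 2 →₀ ℕ :=
  Finsupp.equivFunOnFinite.symm (Sum.elim ![ij.1, p - ij.1] ![ij.2, q - ij.2])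

lemma biExponent_injective (p q : ℕ) : Function.Injective (biExponent p q) := fun ij kl h =>
  Prod.ext (by simpa [biExponent] using DFunLike.congr_fun h (.inl 0))
    (by simpa [biExponent] using DFunLike.congr_fun h (.inr 0))

lemma weight_biWeight_eq_iff {p q : ℕ} {d : Fin 2 ⊕ Fin 2 →₀ ℕ} :
    Finsupp.weight biWeight d = (p, q) ↔
      ∃ ij ∈ Finset.range (p + 1) ×ˢ Finset.range (q + 1), biExponent p q ij = d := by
  simp only [weight_biWeight, Prod.mk.injEq, Finset.mem_product, Finset.mem_range]
  constructor
  · rintro ⟨rfl, rfl⟩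
    refine ⟨(d (.inl 0), d (.inr 0)), by lia, ?_⟩
    ext (i | i) <;> fin_cases i <;> simp [biExponent]
  · rintro ⟨ij, ⟨hi, hj⟩, rfl⟩
    simp only [biExponent, Finsupp.equivFunOnFinite_symm_apply_apply, Sum.elim_inl, Sum.elim_inr,
      Matrix.cons_val_zero, Matrix.cons_val_one]
    lia

lemma finrank_restrictSupport_biExponent (p q : ℕ) (S : Finset (ℕ × ℕ)) :
    Module.finrank ℂ (restrictSupport ℂ (biExponent p q '' S)) = S.card := by
  rw [Module.finrank_eq_nat_card_basis (basisRestrictSupport ℂ _),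
    Nat.card_image_of_injective (biExponent_injective p q), Nat.card_coe_set_eq,
    Set.ncard_coe_finset]

lemma card_filter_add_lt (n : ℕ) :
    {ij ∈ Finset.range (n + 1) ×ˢ Finset.range (n + 1) | ij.1 + ij.2 < n}.card =
      (n + 1).choose 2 := by
  rw [Finset.card_eq_sum_card_fiberwise (f := fun ij => ij.1 + ij.2) (t := Finset.range n)
    fun ij hij => by simpa using (Finset.mem_filter.1 hij).2]
  have hfiber (k : ℕ) (hk : k ∈ Finset.range n) :
      {ij ∈ {ij ∈ Finset.range (n + 1) ×ˢ Finset.range (n + 1) | ij.1 + ij.2 < n} |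
        ij.1 + ij.2 = k} = Finset.HasAntidiagonal.antidiagonal k := by
    ext ij
    simp only [Finset.mem_filter, Finset.mem_product, Finset.mem_range,
      Finset.HasAntidiagonal.mem_antidiagonal] at hk ⊢
    lia
  rw [Finset.sum_congr rfl fun k hk => by rw [hfiber k hk, Finset.Nat.card_antidiagonal],
    Nat.choose_two_right, ← Finset.sum_range_id, Finset.sum_range_succ', add_zero]

lemma card_filter_add_lt_le (p q n : ℕ) :
    {ij ∈ Finset.range (p + 1) ×ˢ Finset.range (q + 1) | ij.1 + ij.2 < n}.card ≤
      (n + 1).choose 2 := by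
  rw [← card_filter_add_lt n]
  refine Finset.card_le_card fun ij h => ?_
  simp only [Finset.mem_filter, Finset.mem_product, Finset.mem_range] at h ⊢
  lia

end Exponents

section CoordinateChange

open Matrix

lemma exists_specialLinearGroup_mulVec_eq {K : Type*} [Field K] {v : Fin 2 → K} (hv : v ≠ 0) :
    ∃ g : SpecialLinearGroup (Fin 2) K, g.1 *ᵥ ![0, 1] = v := by
  by_cases h0 : v 0 = 0
  · have h1 : v 1 ≠ 0 := fun h1 => hv <| funext <| Fin.forall_fin_two.2 ⟨h0, h1⟩
    refine ⟨⟨!![(v 1)⁻¹, 0; 0, v 1], by simp [h1]⟩, ?_⟩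
    ext i; fin_cases i <;> simp [h0]
  · refine ⟨⟨!![0, v 0; -(v 0)⁻¹, v 1], by simp [h0]⟩, ?_⟩
    ext i; fin_cases i <;> simp

lemma isBiForm_bind₁_fromBlocks (A B : Matrix (Fin 2) (Fin 2) ℂ) {F : R4} {p q : ℕ}
    (hF : IsBiForm F p q) : IsBiForm (bind₁ (fromBlocks A 0 0 B).toMvPolynomial F) p q := by
  refine isWeightedHomogeneous_bind₁ (fun i => ?_) hF
  refine IsWeightedHomogeneous.sum _ _ _ fun j _ => ?_
  rcases i with i | i <;> rcases j with j | j <;>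
    first
    | exact isWeightedHomogeneous_monomial _ _ _ (by rw [Finsupp.weight_single, one_smul]; rfl)
    | simpa using isWeightedHomogeneous_zero _ _ _

lemma bind₁_fromBlocks_comp_eq_id {A B A' B' : Matrix (Fin 2) (Fin 2) ℂ} (hA : A' * A = 1)
    (hB : B' * B = 1) :
    (bind₁ (fromBlocks A 0 0 B).toMvPolynomial).comp (bind₁ (fromBlocks A' 0 0 B').toMvPolynomial) =
      AlgHom.id ℂ R4 := by
  ext1 i
  rw [AlgHom.comp_apply, bind₁_X_right, ← toMvPolynomial_mul, fromBlocks_multiply]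
  simp [hA, hB]

/-- The linear change of coordinates of `ℙ¹ × ℙ¹` acting by `g` on the first factor and by `h` on
the second. -/
def coordChange (g h : SpecialLinearGroup (Fin 2) ℂ) : R4 ≃ₐ[ℂ] R4 :=
  AlgEquiv.ofAlgHom (bind₁ (fromBlocks g.1 0 0 h.1).toMvPolynomial)
    (bind₁ (fromBlocks g⁻¹.1 0 0 h⁻¹.1).toMvPolynomial)
    (bind₁_fromBlocks_comp_eq_id (congrArg Subtype.val (inv_mul_cancel g))
      (congrArg Subtype.val (inv_mul_cancel h)))
    (bind₁_fromBlocks_comp_eq_id (congrArg Subtype.val (mul_inv_cancel g))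
      (congrArg Subtype.val (mul_inv_cancel h)))

lemma isBiForm_coordChange_iff {g h : SpecialLinearGroup (Fin 2) ℂ} {F : R4} {p q : ℕ} :
    IsBiForm (coordChange g h F) p q ↔ IsBiForm F p q := by
  refine ⟨fun hF => ?_, isBiForm_bind₁_fromBlocks _ _⟩
  rw [← (coordChange g h).symm_apply_apply F]
  exact isBiForm_bind₁_fromBlocks _ _ hF

lemma eval_coordChange (g h : SpecialLinearGroup (Fin 2) ℂ) (F : R4) (x y : Fin 2 → ℂ) :
    eval (Sum.elim x y) (coordChange g h F) = eval (Sum.elim (g.1 *ᵥ x) (h.1 *ᵥ y)) F := by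
  have hv : (fun i => eval (Sum.elim x y) ((fromBlocks g.1 0 0 h.1).toMvPolynomial i)) =
      Sum.elim (g.1 *ᵥ x) (h.1 *ᵥ y) := by
    ext1 i
    rw [toMvPolynomial_eval_eq_apply, fromBlocks_mulVec]
    simp
  rw [← hv]
  exact eval₂Hom_bind₁ _ _ _ F

end CoordinateChange

section Multiplicity

open Matrix

/-- A change of coordinates moving the point `([0:1],[0:1])` to `P`: it carries forms vanishing at
`P` to forms vanishing at the origin `x₀ = y₀ = 0`. -/
def toOrigin (P : ProjLine × ProjLine) : R4 ≃ₐ[ℂ] R4 :=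
  coordChange (exists_specialLinearGroup_mulVec_eq P.1.rep_nonzero).choose
    (exists_specialLinearGroup_mulVec_eq P.2.rep_nonzero).choose

lemma isBiForm_toOrigin_iff {P : ProjLine × ProjLine} {F : R4} {p q : ℕ} :
    IsBiForm (toOrigin P F) p q ↔ IsBiForm F p q :=
  isBiForm_coordChange_iff

lemma eval_origin_toOrigin (P : ProjLine × ProjLine) (F : R4) :
    eval (Sum.elim ![0, 1] ![0, 1]) (toOrigin P F) = eval (Sum.elim P.1.rep P.2.rep) F := by
  rw [toOrigin, eval_coordChange,
    (exists_specialLinearGroup_mulVec_eq P.1.rep_nonzero).choose_spec,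
    (exists_specialLinearGroup_mulVec_eq P.2.rep_nonzero).choose_spec]

lemma coordChange_X_inl (g h : SpecialLinearGroup (Fin 2) ℂ) (i : Fin 2) :
    coordChange g h (X (.inl i)) = C (g.1 i 0) * X (.inl 0) + C (g.1 i 1) * X (.inl 1) := by
  simp [coordChange, toMvPolynomial, ← C_mul_X_eq_monomial]

lemma coordChange_X_inr (g h : SpecialLinearGroup (Fin 2) ℂ) (i : Fin 2) :
    coordChange g h (X (.inr i)) = C (h.1 i 0) * X (.inr 0) + C (h.1 i 1) * X (.inr 1) := by
  simp [coordChange, toMvPolynomial, ← C_mul_X_eq_monomial]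

lemma coordChange_sub_inl (g h : SpecialLinearGroup (Fin 2) ℂ) :
    coordChange g h (C ((g.1 *ᵥ ![0, 1]) 1) * X (.inl 0) - C ((g.1 *ᵥ ![0, 1]) 0) * X (.inl 1)) =
      X (.inl 0) := by
  have hdet : (C (g.1 0 0) * C (g.1 1 1) - C (g.1 0 1) * C (g.1 1 0) : R4) = 1 := by
    rw [← C_mul, ← C_mul, ← C_sub, ← det_fin_two, g.2, C_1]
  have hv : g.1 *ᵥ ![0, 1] = ![g.1 0 1, g.1 1 1] := by simp
  simp only [hv, cons_val_zero, cons_val_one, map_sub, map_mul, coordChange_X_inl,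
    ← algebraMap_eq, AlgEquiv.commutes]
  rw [algebraMap_eq]
  linear_combination X (.inl 0) * hdet

lemma coordChange_sub_inr (g h : SpecialLinearGroup (Fin 2) ℂ) :
    coordChange g h (C ((h.1 *ᵥ ![0, 1]) 1) * X (.inr 0) - C ((h.1 *ᵥ ![0, 1]) 0) * X (.inr 1)) =
      X (.inr 0) := by
  have hdet : (C (h.1 0 0) * C (h.1 1 1) - C (h.1 0 1) * C (h.1 1 0) : R4) = 1 := by
    rw [← C_mul, ← C_mul, ← C_sub, ← det_fin_two, h.2, C_1]
  have hv : h.1 *ᵥ ![0, 1] = ![h.1 0 1, h.1 1 1] := by simp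
  simp only [hv, cons_val_zero, cons_val_one, map_sub, map_mul, coordChange_X_inr,
    ← algebraMap_eq, AlgEquiv.commutes]
  rw [algebraMap_eq]
  linear_combination X (.inr 0) * hdet

/-- The form `b x₀ - a x₁` of bidegree `(1, 0)` cutting out the fiber `{ξ} × ℙ¹` over
`ξ = [a:b]`. -/
def fstFiber (ξ : ProjLine) : R4 :=
  C (ξ.rep 1) * X (.inl 0) - C (ξ.rep 0) * X (.inl 1)

/-- The form `d y₀ - c y₁` of bidegree `(0, 1)` cutting out the fiber `ℙ¹ × {η}` over
`η = [c:d]`. -/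
def sndFiber (η : ProjLine) : R4 :=
  C (η.rep 1) * X (.inr 0) - C (η.rep 0) * X (.inr 1)

lemma toOrigin_fstFiber (P : ProjLine × ProjLine) : toOrigin P (fstFiber P.1) = X (.inl 0) := by
  have h := coordChange_sub_inl (exists_specialLinearGroup_mulVec_eq P.1.rep_nonzero).choose
    (exists_specialLinearGroup_mulVec_eq P.2.rep_nonzero).choose
  rwa [(exists_specialLinearGroup_mulVec_eq P.1.rep_nonzero).choose_spec] at h

lemma toOrigin_sndFiber (P : ProjLine × ProjLine) : toOrigin P (sndFiber P.2) = X (.inr 0) := by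
  have h := coordChange_sub_inr (exists_specialLinearGroup_mulVec_eq P.1.rep_nonzero).choose
    (exists_specialLinearGroup_mulVec_eq P.2.rep_nonzero).choose
  rwa [(exists_specialLinearGroup_mulVec_eq P.2.rep_nonzero).choose_spec] at h

lemma isBiForm_fstFiber (ξ : ProjLine) : IsBiForm (fstFiber ξ) 1 0 :=
  ((isWeightedHomogeneous_X _ _ _).C_mul _).sub ((isWeightedHomogeneous_X _ _ _).C_mul _)

lemma isBiForm_sndFiber (η : ProjLine) : IsBiForm (sndFiber η) 0 1 :=
  ((isWeightedHomogeneous_X _ _ _).C_mul _).sub ((isWeightedHomogeneous_X _ _ _).C_mul _)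

lemma fstFiber_ne_zero (ξ : ProjLine) : fstFiber ξ ≠ 0 := fun h =>
  X_ne_zero (R := ℂ) _ (by rw [← toOrigin_fstFiber (ξ, ξ), h, map_zero])

lemma sndFiber_ne_zero (η : ProjLine) : sndFiber η ≠ 0 := fun h =>
  X_ne_zero (R := ℂ) _ (by rw [← toOrigin_sndFiber (η, η), h, map_zero])

lemma map_toOrigin_pointIdeal (P : ProjLine × ProjLine) :
    (pointIdeal P).map (toOrigin P) = Ideal.span (X '' {.inl 0, .inr 0}) := by
  rw [show pointIdeal P = Ideal.span {fstFiber P.1, sndFiber P.2} from rfl, Ideal.map_span,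
    Set.image_pair, Set.image_pair, toOrigin_fstFiber, toOrigin_sndFiber]

/-- The weight on the variables whose weighted order is the multiplicity at the origin
`x₀ = y₀ = 0`. -/
def originWeight : Fin 2 ⊕ Fin 2 → ℕ :=
  ({.inl 0, .inr 0} : Set (Fin 2 ⊕ Fin 2)).indicator 1

lemma weight_originWeight (d : Fin 2 ⊕ Fin 2 →₀ ℕ) :
    Finsupp.weight originWeight d = d (.inl 0) + d (.inr 0) := by
  rw [Finsupp.weight_apply, Finsupp.sum_fintype _ _ (by simp)]
  simp [originWeight, Fintype.sum_sum_type]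

/-- The multiplicity of `F` at the point `P`, i.e. the largest `n` with `F ∈ I(P)ⁿ`; it is `⊤` for
`F = 0`. -/
def pointMult (P : ProjLine × ProjLine) (F : R4) : ℕ∞ :=
  (toOrigin P F : MvPowerSeries (Fin 2 ⊕ Fin 2) ℂ).weightedOrder originWeight

variable {P : ProjLine × ProjLine} {F : R4} {p q n : ℕ}

lemma mem_pointIdeal_pow_iff : F ∈ pointIdeal P ^ n ↔ n ≤ pointMult P F := by
  rw [pointMult, originWeight, ← mem_span_X_pow_iff, ← map_toOrigin_pointIdeal, ← Ideal.map_pow,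
    Ideal.mem_map_of_equiv]
  exact ⟨fun h => ⟨F, h, rfl⟩, fun ⟨G, hG, h⟩ => (toOrigin P).injective h ▸ hG⟩

lemma mem_pointIdeal_iff : F ∈ pointIdeal P ↔ 1 ≤ pointMult P F := by
  simpa using mem_pointIdeal_pow_iff (n := 1)

lemma pointMult_one (P : ProjLine × ProjLine) : pointMult P 1 = 0 := by
  simp [pointMult]

lemma pointMult_mul (P : ProjLine × ProjLine) (F G : R4) :
    pointMult P (F * G) = pointMult P F + pointMult P G := by
  rw [pointMult, map_mul, coe_mul, MvPowerSeries.weightedOrder_mul, pointMult, pointMult]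

lemma le_pointMult_iff :
    n ≤ pointMult P F ↔ ∀ d ∈ (toOrigin P F).support, n ≤ d (.inl 0) + d (.inr 0) := by
  simp only [← weight_originWeight]
  constructor
  · intro h d hd
    exact_mod_cast h.trans (MvPowerSeries.weightedOrder_le _
      (by rwa [coeff_coe, ← mem_support_iff]))
  · intro h
    refine MvPowerSeries.nat_le_weightedOrder _ fun d hd => ?_
    rw [coeff_coe]
    by_contra hne
    exact hd.not_ge (h d (mem_support_iff.2 hne))

lemma IsBiForm.pointMult_le (hF : IsBiForm F p q) (h0 : F ≠ 0) (P : ProjLine × ProjLine) :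
    pointMult P F ≤ (p + q : ℕ) := by
  obtain ⟨d, hd⟩ := support_nonempty.2 ((map_ne_zero_iff _ (toOrigin P).injective).2 h0)
  rw [mem_support_iff] at hd
  have hweight := isBiForm_toOrigin_iff.2 hF hd
  rw [weight_biWeight, Prod.mk.injEq] at hweight
  refine (MvPowerSeries.weightedOrder_le _ (by rwa [coeff_coe])).trans ?_
  rw [weight_originWeight]
  exact_mod_cast by lia

lemma IsBiForm.eval_origin_eq_zero_iff (hF : IsBiForm F p q) :
    eval (Sum.elim ![0, 1] ![0, 1]) F = 0 ↔ ∀ d ∈ F.support, 1 ≤ d (.inl 0) + d (.inr 0) := by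
  have hbi {d : Fin 2 ⊕ Fin 2 →₀ ℕ} (hd : d ∈ F.support) :
      ∃ ij ∈ Finset.range (p + 1) ×ˢ Finset.range (q + 1), biExponent p q ij = d :=
    weight_biWeight_eq_iff.1 (hF (mem_support_iff.1 hd))
  have heval : eval (Sum.elim ![0, 1] ![0, 1]) F = coeff (biExponent p q (0, 0)) F := by
    rw [eval_eq', Finset.sum_eq_single (biExponent p q (0, 0))]
    · simp [biExponent]
    · intro d hd hne
      obtain ⟨⟨i, j⟩, -, rfl⟩ := hbi hd
      have hij : i ≠ 0 ∨ j ≠ 0 := by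
        contrapose! hne
        rw [hne.1, hne.2]
      rcases hij with hi | hj <;> simp [biExponent, *]
    · intro h
      rw [notMem_support_iff.1 h, zero_mul]
  rw [heval, ← notMem_support_iff]
  constructor
  · intro h d hd
    obtain ⟨⟨i, j⟩, -, rfl⟩ := hbi hd
    refine Nat.one_le_iff_ne_zero.2 fun h0 => h ?_
    obtain ⟨rfl, rfl⟩ : i = 0 ∧ j = 0 := by simpa [biExponent] using h0
    exact hd
  · intro h hmem
    simpa [biExponent] using h _ hmem

lemma IsBiForm.one_le_pointMult_iff (hF : IsBiForm F p q) :
    1 ≤ pointMult P F ↔ eval (Sum.elim P.1.rep P.2.rep) F = 0 := by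
  rw [← eval_origin_toOrigin, (isBiForm_toOrigin_iff.2 hF).eval_origin_eq_zero_iff,
    ← le_pointMult_iff, Nat.cast_one]

lemma one_le_pointMult_fstFiber (P : ProjLine × ProjLine) : 1 ≤ pointMult P (fstFiber P.1) :=
  mem_pointIdeal_iff.1 (Ideal.subset_span (Set.mem_insert _ _))

lemma one_le_pointMult_sndFiber (P : ProjLine × ProjLine) : 1 ≤ pointMult P (sndFiber P.2) :=
  mem_pointIdeal_iff.1 (Ideal.subset_span (Set.mem_insert_of_mem _ rfl))

lemma eq_of_rep_det_eq_zero {x y : ProjLine}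
    (h : x.rep 1 * y.rep 0 - x.rep 0 * y.rep 1 = 0) : x = y := by
  rw [← Projectivization.dependent_pair_iff_eq, Projectivization.dependent_iff]
  intro hind
  have hunit := linearIndependent_rows_iff_isUnit (A := Matrix.of (Projectivization.rep ∘ ![x, y]))
    |>.1 hind
  rw [isUnit_iff_isUnit_det, det_fin_two, isUnit_iff_ne_zero] at hunit
  refine hunit ?_
  simp only [Function.comp_apply, of_apply, cons_val_zero, cons_val_one]
  linear_combination -h

lemma pointMult_fstFiber_of_ne {ξ : ProjLine} (h : ξ ≠ P.1) : pointMult P (fstFiber ξ) = 0 := by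
  rw [← Order.lt_one_iff, ← not_le, (isBiForm_fstFiber ξ).one_le_pointMult_iff]
  exact fun h0 => h (eq_of_rep_det_eq_zero (by simpa [fstFiber] using h0))

lemma pointMult_sndFiber_of_ne {η : ProjLine} (h : η ≠ P.2) : pointMult P (sndFiber η) = 0 := by
  rw [← Order.lt_one_iff, ← not_le, (isBiForm_sndFiber η).one_le_pointMult_iff]
  exact fun h0 => h (eq_of_rep_det_eq_zero (by simpa [sndFiber] using h0))

end Multiplicity

section Separation

variable {P Q : ProjLine × ProjLine}

instance : Infinite ProjLine :=
  (OnePoint.equivProjectivization ℂ).infinite_iff.1 inferInstance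

lemma pointMult_pow (P : ProjLine × ProjLine) (F : R4) (n : ℕ) :
    pointMult P (F ^ n) = n * pointMult P F := by
  induction n with
  | zero => simp [pointMult_one]
  | succ n ih => rw [pow_succ, pointMult_mul, ih, Nat.cast_add, Nat.cast_one, add_mul, one_mul]

lemma exists_isBiForm_pointMult_eq_zero (P : ProjLine × ProjLine) (a b : ℕ) :
    ∃ B, IsBiForm B a b ∧ pointMult P B = 0 := by
  obtain ⟨ξ, hξ⟩ := exists_ne P.1
  obtain ⟨η, hη⟩ := exists_ne P.2
  refine ⟨fstFiber ξ ^ a * sndFiber η ^ b, ?_, ?_⟩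
  · simpa using ((isBiForm_fstFiber ξ).pow a).mul ((isBiForm_sndFiber η).pow b)
  · rw [pointMult_mul, pointMult_pow, pointMult_pow, pointMult_fstFiber_of_ne hξ,
      pointMult_sndFiber_of_ne hη, mul_zero, mul_zero, add_zero]

lemma exists_isBiForm_one_one_separating (h : Q ≠ P) :
    ∃ E, IsBiForm E 1 1 ∧ 1 ≤ pointMult Q E ∧ pointMult P E = 0 := by
  by_cases hfst : Q.1 = P.1
  · have hsnd : Q.2 ≠ P.2 := fun hsnd => h (Prod.ext hfst hsnd)
    obtain ⟨B, hB, hBP⟩ := exists_isBiForm_pointMult_eq_zero P 1 0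
    refine ⟨B * sndFiber Q.2, hB.mul (isBiForm_sndFiber _), ?_, ?_⟩
    · exact (one_le_pointMult_sndFiber Q).trans (by rw [pointMult_mul]; exact le_add_self)
    · rw [pointMult_mul, hBP, pointMult_sndFiber_of_ne hsnd, add_zero]
  · obtain ⟨B, hB, hBP⟩ := exists_isBiForm_pointMult_eq_zero P 0 1
    refine ⟨fstFiber Q.1 * B, (isBiForm_fstFiber _).mul hB, ?_, ?_⟩
    · exact (one_le_pointMult_fstFiber Q).trans (by rw [pointMult_mul]; exact le_self_add)
    · rw [pointMult_mul, hBP, pointMult_fstFiber_of_ne hfst, add_zero]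

lemma exists_isBiForm_separating {Z : Finset (ProjLine × ProjLine)} (hP : P ∉ Z)
    (ν : ProjLine × ProjLine → ℕ) {p q : ℕ} (hp : ∑ Q ∈ Z, ν Q ≤ p) (hq : ∑ Q ∈ Z, ν Q ≤ q) :
    ∃ B, IsBiForm B p q ∧ pointMult P B = 0 ∧ ∀ Q ∈ Z, ν Q ≤ pointMult Q B := by
  classical
  induction Z using Finset.induction_on generalizing p q with
  | empty => simpa using exists_isBiForm_pointMult_eq_zero P p q
  | insert Q Z hQ ih =>
    rw [Finset.sum_insert hQ] at hp hq
    obtain ⟨hPQ, hPZ⟩ := not_or.1 (mt Finset.mem_insert.2 hP)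
    obtain ⟨E, hE, hQE, hPE⟩ := exists_isBiForm_one_one_separating (Ne.symm hPQ)
    obtain ⟨B, hB, hPB, hZB⟩ := ih hPZ (p := p - ν Q) (q := q - ν Q) (by lia) (by lia)
    refine ⟨E ^ ν Q * B, ?_, ?_, fun R hR => ?_⟩
    · have hEB := (hE.pow (ν Q)).mul hB
      rwa [mul_one, Nat.add_sub_cancel' (by lia), Nat.add_sub_cancel' (by lia)] at hEB
    · rw [pointMult_mul, pointMult_pow, hPE, hPB, mul_zero, add_zero]
    · rw [pointMult_mul, pointMult_pow]
      rcases Finset.mem_insert.1 hR with rfl | hR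
      · exact le_add_right (le_mul_of_one_le_right' hQE)
      · exact le_add_left (hZB R hR)

end Separation

section Dimension

open Module

lemma finrank_add_finrank_le_finrank_inf_add {K E : Type*} [DivisionRing K] [AddCommGroup E]
    [Module K E] {A B V : Submodule K E} [FiniteDimensional K V] (hA : A ≤ V) (hB : B ≤ V) :
    finrank K A + finrank K B ≤ finrank K (A ⊓ B : Submodule K E) + finrank K V := by
  have := Submodule.finiteDimensional_of_le hA
  have := Submodule.finiteDimensional_of_le hB
  rw [← Submodule.finrank_sup_add_finrank_inf_eq, add_comm]
  gcongr
  exact Submodule.finrank_mono (sup_le hA hB)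

lemma finrank_map_mulLeft {K A : Type*} [Field K] [CommRing A] [IsDomain A] [Algebra K A] {a : A}
    (ha : a ≠ 0) (W : Submodule K A) : finrank K (W.map (LinearMap.mulLeft K a)) = finrank K W :=
  (W.equivMapOfInjective _ (mul_right_injective₀ ha)).finrank_eq.symm

/-- The space of forms of bidegree `(p, q)`. -/
def biForms (p q : ℕ) : Submodule ℂ R4 :=
  weightedHomogeneousSubmodule ℂ biWeight (p, q)

/-- The space of forms of bidegree `(p, q)` with multiplicity at least `ν P` at every `P ∈ Z`. -/
def fatForms (Z : Finset (ProjLine × ProjLine)) (ν : ProjLine × ProjLine → ℕ) (p q : ℕ) :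
    Submodule ℂ R4 :=
  biForms p q ⊓ ⨅ P ∈ Z, (pointIdeal P ^ ν P).restrictScalars ℂ

variable {Z : Finset (ProjLine × ProjLine)} {ν : ProjLine × ProjLine → ℕ} {p q n : ℕ}
  {P : ProjLine × ProjLine} {F : R4}

lemma mem_biForms : F ∈ biForms p q ↔ IsBiForm F p q :=
  Iff.rfl

lemma mem_fatForms : F ∈ fatForms Z ν p q ↔ IsBiForm F p q ∧ ∀ P ∈ Z, ν P ≤ pointMult P F := by
  simp [fatForms, mem_biForms, mem_pointIdeal_pow_iff]

lemma isBiForm_iff_mem_restrictSupport :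
    IsBiForm F p q ↔ F ∈ restrictSupport ℂ
      (biExponent p q '' (Finset.range (p + 1) ×ˢ Finset.range (q + 1) : Finset (ℕ × ℕ))) := by
  simp only [IsBiForm, IsWeightedHomogeneous, weight_biWeight_eq_iff,
    ← MvPolynomial.mem_support_iff]
  rfl

lemma finrank_biForms (p q : ℕ) :
    finrank ℂ (biForms p q) = (p + 1) * (q + 1) := by
  have h : biForms p q = restrictSupport ℂ
      (biExponent p q '' (Finset.range (p + 1) ×ˢ Finset.range (q + 1) : Finset (ℕ × ℕ))) :=
    Submodule.ext fun _ => isBiForm_iff_mem_restrictSupport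
  rw [h, finrank_restrictSupport_biExponent, Finset.card_product, Finset.card_range,
    Finset.card_range]

instance : FiniteDimensional ℂ (biForms p q) :=
  FiniteDimensional.of_finrank_pos (by rw [finrank_biForms]; positivity)

instance : FiniteDimensional ℂ (fatForms Z ν p q) :=
  Submodule.finiteDimensional_of_le inf_le_left

lemma map_toOrigin_fatForms_singleton (P : ProjLine × ProjLine) (ν : ProjLine × ProjLine → ℕ)
    (p q : ℕ) :
    (fatForms {P} ν p q).map (toOrigin P).toLinearMap = restrictSupport ℂ (biExponent p q ''
      ({ij ∈ Finset.range (p + 1) ×ˢ Finset.range (q + 1) | ν P ≤ ij.1 + ij.2} :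
        Finset (ℕ × ℕ))) := by
  ext F
  obtain ⟨F, rfl⟩ := (toOrigin P).surjective F
  have hmap : toOrigin P F ∈ (fatForms {P} ν p q).map (toOrigin P).toLinearMap ↔
      F ∈ fatForms {P} ν p q :=
    (toOrigin P).injective.mem_set_image
  rw [hmap, mem_fatForms, ← isBiForm_toOrigin_iff (P := P), isBiForm_iff_mem_restrictSupport]
  simp only [Finset.mem_singleton, forall_eq, le_pointMult_iff]
  constructor
  · rintro ⟨hbi, hn⟩ d hd
    obtain ⟨ij, hij, rfl⟩ := hbi hd
    exact ⟨ij, Finset.mem_filter.2 ⟨hij, by simpa [biExponent] using hn _ hd⟩, rfl⟩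
  · refine fun h => ⟨h.trans (Set.image_mono (Finset.coe_subset.2 (Finset.filter_subset _ _))), ?_⟩
    intro d hd
    obtain ⟨ij, hij, rfl⟩ := h hd
    simpa [biExponent] using (Finset.mem_filter.1 hij).2

lemma fatForms_insert [DecidableEq (ProjLine × ProjLine)] (P : ProjLine × ProjLine)
    (Z : Finset (ProjLine × ProjLine)) (ν : ProjLine × ProjLine → ℕ) (p q : ℕ) :
    fatForms (insert P Z) ν p q = fatForms Z ν p q ⊓ fatForms {P} ν p q := by
  ext F
  simp only [Submodule.mem_inf, mem_fatForms, Finset.forall_mem_insert, Finset.mem_singleton,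
    forall_eq]
  tauto

lemma finrank_fatForms_empty (ν : ProjLine × ProjLine → ℕ) (p q : ℕ) :
    finrank ℂ (fatForms ∅ ν p q) = (p + 1) * (q + 1) := by
  have h : fatForms ∅ ν p q = biForms p q := by
    ext F
    simp [mem_fatForms, mem_biForms]
  rw [h, finrank_biForms]

lemma le_finrank_fatForms_singleton_add (P : ProjLine × ProjLine) (ν : ProjLine × ProjLine → ℕ)
    (p q : ℕ) :
    (p + 1) * (q + 1) ≤ finrank ℂ (fatForms {P} ν p q) + (ν P + 1).choose 2 := by
  have hfin : finrank ℂ (fatForms {P} ν p q) = _ :=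
    ((toOrigin P).toLinearEquiv.finrank_map_eq (fatForms {P} ν p q)).symm
  rw [hfin, show (fatForms {P} ν p q).map _ = _ from map_toOrigin_fatForms_singleton P ν p q,
    finrank_restrictSupport_biExponent]
  calc (p + 1) * (q + 1) = (Finset.range (p + 1) ×ˢ Finset.range (q + 1)).card := by simp
    _ = _ := (Finset.card_filter_add_card_filter_not fun ij => ν P ≤ ij.1 + ij.2).symm
    _ ≤ _ := by
      simp only [not_le]
      gcongr
      exact card_filter_add_lt_le p q (ν P)

lemma le_finrank_fatForms_add (Z : Finset (ProjLine × ProjLine)) (ν : ProjLine × ProjLine → ℕ)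
    (p q : ℕ) :
    (p + 1) * (q + 1) ≤ finrank ℂ (fatForms Z ν p q) + ∑ P ∈ Z, (ν P + 1).choose 2 := by
  classical
  induction Z using Finset.induction_on with
  | empty => simp [finrank_fatForms_empty]
  | insert P Z hP ih =>
    have hinf := finrank_add_finrank_le_finrank_inf_add (A := fatForms Z ν p q)
      (B := fatForms {P} ν p q) inf_le_left inf_le_left
    have hsingle := le_finrank_fatForms_singleton_add P ν p q
    rw [finrank_biForms, ← fatForms_insert] at hinf
    rw [Finset.sum_insert hP]
    lia

lemma exists_ne_zero_of_sum_choose_lt (h : ∑ P ∈ Z, (ν P + 1).choose 2 < (p + 1) * (q + 1)) :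
    ∃ F ≠ 0, IsBiForm F p q ∧ ∀ P ∈ Z, ν P ≤ pointMult P F := by
  have hpos : 0 < finrank ℂ (fatForms Z ν p q) := by
    have := le_finrank_fatForms_add Z ν p q
    lia
  obtain ⟨F, hF, h0⟩ := (Submodule.ne_bot_iff _).1
    (Submodule.one_le_finrank_iff.1 hpos)
  exact ⟨F, h0, mem_fatForms.1 hF⟩

/-- The space of forms of bidegree `(n, n)` which in the coordinates centred at `P` only involve
monomials of order less than `n`: a complement of the forms with multiplicity at least `n`. -/
def lowOrderForms (P : ProjLine × ProjLine) (n : ℕ) : Submodule ℂ R4 :=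
  (restrictSupport ℂ (biExponent n n ''
    ({ij ∈ Finset.range (n + 1) ×ˢ Finset.range (n + 1) | ij.1 + ij.2 < n} :
      Finset (ℕ × ℕ)))).comap (toOrigin P).toLinearMap

lemma finrank_lowOrderForms (P : ProjLine × ProjLine) (n : ℕ) :
    finrank ℂ (lowOrderForms P n) = (n + 1).choose 2 := by
  rw [← card_filter_add_lt, ← finrank_restrictSupport_biExponent n n, lowOrderForms,
    ← LinearEquiv.finrank_map_eq (toOrigin P).toLinearEquiv]
  exact congrArg (fun W : Submodule ℂ R4 => finrank ℂ W)
    (Submodule.map_comap_eq_of_surjective (toOrigin P).surjective _)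

lemma isBiForm_of_mem_lowOrderForms (hF : F ∈ lowOrderForms P n) : IsBiForm F n n := by
  rw [← isBiForm_toOrigin_iff, isBiForm_iff_mem_restrictSupport]
  refine restrictSupport_mono ℂ (Set.image_mono ?_) hF
  exact Finset.coe_subset.2 (Finset.filter_subset _ _)

lemma pointMult_lt_of_mem_lowOrderForms (hF : F ∈ lowOrderForms P n) (h0 : F ≠ 0) :
    pointMult P F < n := by
  obtain ⟨d, hd⟩ := support_nonempty.2 ((map_ne_zero_iff _ (toOrigin P).injective).2 h0)
  obtain ⟨ij, hij, rfl⟩ := hF hd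
  rw [← not_le, le_pointMult_iff]
  exact fun h => (h _ hd).not_gt (by simpa [biExponent] using (Finset.mem_filter.1 hij).2)

lemma finrank_fatForms_add_le (hp : ∑ P ∈ Z, ν P ≤ p) (hq : ∑ P ∈ Z, ν P ≤ q) :
    finrank ℂ (fatForms Z ν p q) + ∑ P ∈ Z, (ν P + 1).choose 2 ≤ (p + 1) * (q + 1) := by
  classical
  induction Z using Finset.induction_on with
  | empty => simp [finrank_fatForms_empty]
  | insert P Z hP ih =>
    rw [Finset.sum_insert hP] at hp hq ⊢
    obtain ⟨B, hB, hPB, hZB⟩ := exists_isBiForm_separating hP ν (p := p - ν P) (q := q - ν P)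
      (by lia) (by lia)
    have hB0 : B ≠ 0 := by
      rintro rfl
      simp [pointMult] at hPB
    have hle : (lowOrderForms P (ν P)).map (LinearMap.mulLeft ℂ B) ≤ fatForms Z ν p q := by
      rintro _ ⟨T, hT, rfl⟩
      refine mem_fatForms.2 ⟨?_, fun Q hQ => ?_⟩
      · have hBT := hB.mul (isBiForm_of_mem_lowOrderForms hT)
        rwa [Nat.sub_add_cancel (by lia), Nat.sub_add_cancel (by lia)] at hBT
      · exact (hZB Q hQ).trans (by rw [LinearMap.mulLeft_apply, pointMult_mul]; exact le_self_add)
    have hdisj : fatForms (insert P Z) ν p q ⊓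
        (lowOrderForms P (ν P)).map (LinearMap.mulLeft ℂ B) = ⊥ := by
      refine (Submodule.eq_bot_iff _).2 ?_
      rintro _ ⟨hfat, T, hT, rfl⟩
      by_contra hne
      have hP' := (mem_fatForms.1 hfat).2 P (Finset.mem_insert_self _ _)
      rw [LinearMap.mulLeft_apply, pointMult_mul, hPB, zero_add] at hP'
      exact (pointMult_lt_of_mem_lowOrderForms hT (right_ne_zero_of_mul hne)).not_ge hP'
    have hinf := finrank_add_finrank_le_finrank_inf_add
      (fatForms_insert P Z ν p q ▸ inf_le_left) hle
    rw [hdisj, finrank_bot, finrank_map_mulLeft hB0, finrank_lowOrderForms] at hinf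
    have := ih (by lia) (by lia)
    lia

end Dimension

section Intersection

open Module

variable {Z : Finset (ProjLine × ProjLine)} {μ κ : ProjLine × ProjLine → ℕ}
  {F G H : R4} {a b c d p q r : ℕ}

lemma finrank_sup_le_add {K V : Type*} [DivisionRing K] [AddCommGroup V] [Module K V]
    {A M N : Submodule K V} [FiniteDimensional K M] [FiniteDimensional K N] (hM : A ≤ M)
    (hN : A ≤ N) {t : ℕ} (h : finrank K M ≤ finrank K A + t) :
    finrank K (M ⊔ N : Submodule K V) ≤ finrank K N + t := by
  have hsup := Submodule.finrank_sup_add_finrank_inf_eq M N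
  have hinf := Submodule.finrank_mono (le_inf hM hN)
  lia

lemma map_mulLeft_fatForms_le (hF : IsBiForm F a b) (hμ : ∀ P ∈ Z, μ P ≤ pointMult P F) :
    (fatForms Z κ p q).map (LinearMap.mulLeft ℂ F) ≤ fatForms Z (μ + κ) (a + p) (b + q) := by
  rintro _ ⟨G, hG, rfl⟩
  obtain ⟨hG, hκ⟩ := mem_fatForms.1 hG
  refine mem_fatForms.2 ⟨hF.mul hG, fun P hP => ?_⟩
  rw [LinearMap.mulLeft_apply, pointMult_mul, Pi.add_apply, Nat.cast_add]
  exact add_le_add (hμ P hP) (hκ P hP)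

lemma finrank_map_mulLeft_sup_le (hF : IsBiForm F a b) (h0 : F ≠ 0)
    (hμ : ∀ P ∈ Z, μ P ≤ pointMult P F) {E : Submodule ℂ R4} [FiniteDimensional ℂ E]
    (hE : fatForms Z (μ + κ) (a + p) (b + q) ≤ E) :
    finrank ℂ ((biForms p q).map (LinearMap.mulLeft ℂ F) ⊔ E : Submodule ℂ R4) ≤
      finrank ℂ E + ∑ P ∈ Z, (κ P + 1).choose 2 := by
  refine finrank_sup_le_add (Submodule.map_mono inf_le_left)
    ((map_mulLeft_fatForms_le hF hμ).trans hE) ?_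
  rw [finrank_map_mulLeft h0, finrank_map_mulLeft h0, finrank_biForms]
  exact le_finrank_fatForms_add Z κ p q

lemma finrank_inf_map_mulLeft_le (hirr : Irreducible G) (hG : IsBiForm G a b) (hdvd : ¬G ∣ H) :
    finrank ℂ ((biForms p q).map (LinearMap.mulLeft ℂ G) ⊓
      (biForms (a + r) (b + r)).map (LinearMap.mulLeft ℂ H) : Submodule ℂ R4) ≤
        (r + 1) * (r + 1) := by
  have hH0 : H ≠ 0 := fun h => hdvd (h ▸ dvd_zero G)
  rw [← finrank_biForms, ← finrank_map_mulLeft (mul_ne_zero hH0 hirr.ne_zero) (biForms r r)]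
  refine Submodule.finrank_mono ?_
  rintro _ ⟨⟨A, -, rfl⟩, B, hB, hAB⟩
  obtain ⟨K, rfl⟩ := (hirr.prime.dvd_or_dvd ⟨A, hAB⟩).resolve_left hdvd
  refine ⟨K, hG.of_mul_left hB hirr.ne_zero, ?_⟩
  rw [← hAB, LinearMap.mulLeft_apply, LinearMap.mulLeft_apply, mul_assoc]

lemma choose_two_add_add_one (m n : ℕ) :
    (m + n + 1).choose 2 = (m + 1).choose 2 + (n + 1).choose 2 + m * n := by
  induction n with
  | zero => simp
  | succ n ih =>
    rw [← add_assoc, Nat.choose_succ_succ', Nat.choose_succ_succ' (n + 1), Nat.choose_one_right,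
      Nat.choose_one_right, ih]
    ring

/-- An intersection number on `ℙ¹ × ℙ¹` bounds the sum of its local contributions. The dimension
count takes place in bidegrees so large that the conditions of multiplicity `μ P + κ P` are
independent. -/
lemma sum_mul_le_of_not_dvd (hG : IsBiForm G a b) (hH : IsBiForm H c d) (hirr : Irreducible G)
    (hdvd : ¬G ∣ H) (hμ : ∀ P ∈ Z, μ P ≤ pointMult P G) (hκ : ∀ P ∈ Z, κ P ≤ pointMult P H) :
    ∑ P ∈ Z, μ P * κ P ≤ a * d + b * c := by
  have hH0 : H ≠ 0 := fun h => hdvd (h ▸ dvd_zero G)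
  set r := ∑ P ∈ Z, (μ + κ) P
  set MG := (biForms (c + r) (d + r)).map (LinearMap.mulLeft ℂ G)
  set MH := (biForms (a + r) (b + r)).map (LinearMap.mulLeft ℂ H)
  set N := fatForms Z (μ + κ) (a + (c + r)) (b + (d + r)) with hN
  have hN' : fatForms Z (κ + μ) (c + (a + r)) (d + (b + r)) ≤ N := by
    rw [hN, add_comm μ, add_left_comm a, add_left_comm b]
  have hfat : finrank ℂ N + ∑ P ∈ Z, ((μ + κ) P + 1).choose 2 ≤
      (a + (c + r) + 1) * (b + (d + r) + 1) :=
    finrank_fatForms_add_le (by lia) (by lia)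
  have hMGN : finrank ℂ (MG ⊔ N : Submodule ℂ R4) ≤
      finrank ℂ N + ∑ P ∈ Z, (κ P + 1).choose 2 :=
    finrank_map_mulLeft_sup_le hG hirr.ne_zero hμ le_rfl
  have hMHN : finrank ℂ (MH ⊔ (MG ⊔ N) : Submodule ℂ R4) ≤
      finrank ℂ (MG ⊔ N : Submodule ℂ R4) + ∑ P ∈ Z, (μ P + 1).choose 2 :=
    finrank_map_mulLeft_sup_le hH hH0 hκ (hN'.trans le_sup_right)
  have hsup : finrank ℂ (MG ⊔ MH : Submodule ℂ R4) ≤ finrank ℂ (MH ⊔ (MG ⊔ N) : Submodule ℂ R4) :=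
    Submodule.finrank_mono (sup_le (le_sup_left.trans le_sup_right) le_sup_left)
  have hinf : finrank ℂ (MG ⊓ MH : Submodule ℂ R4) ≤ (r + 1) * (r + 1) :=
    finrank_inf_map_mulLeft_le hirr hG hdvd
  have hdim := Submodule.finrank_sup_add_finrank_inf_eq MG MH
  rw [finrank_map_mulLeft hirr.ne_zero, finrank_map_mulLeft hH0, finrank_biForms,
    finrank_biForms] at hdim
  simp only [Pi.add_apply, choose_two_add_add_one, Finset.sum_add_distrib] at hfat
  linarith

end Intersection

section RationalPoints

lemma eval_smul_of_isHomogeneous {σ R : Type*} [CommSemiring R] {F : MvPolynomial σ R} {n : ℕ}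
    (hF : F.IsHomogeneous n) (c : R) (v : σ → R) : eval (c • v) F = c ^ n * eval v F := by
  rw [eval_eq, eval_eq, Finset.mul_sum]
  refine Finset.sum_congr rfl fun d hd => ?_
  have hdeg : ∑ i ∈ d.support, d i = n := (hF.degree_eq_sum_deg_support hd).symm
  simp only [Pi.smul_apply, smul_eq_mul, mul_pow, Finset.prod_mul_distrib,
    Finset.prod_pow_eq_pow_sum, hdeg, mul_left_comm]

lemma exists_eval_rep_eq_zero {K : Type*} [Field K] [IsAlgClosed K] {F : MvPolynomial (Fin 2) K}
    {n : ℕ} (hF : F.IsHomogeneous n) (hn : n ≠ 0) :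
    ∃ x : Projectivization K (Fin 2 → K), eval x.rep F = 0 := by
  suffices h : ∃ v ≠ 0, eval v F = 0 by
    obtain ⟨v, hv0, hv⟩ := h
    obtain ⟨c, hc⟩ := Projectivization.exists_smul_eq_mk_rep K v hv0
    refine ⟨Projectivization.mk K v hv0, ?_⟩
    rw [← hc, Units.smul_def, eval_smul_of_isHomogeneous hF, hv, mul_zero]
  set p : Polynomial K := aeval ![Polynomial.X, 1] F with hp
  by_cases hdeg : p.degree = 0
  · refine ⟨![1, 0], by simp, ?_⟩
    rw [← Polynomial.homogenize_eq_of_isHomogeneous hF hp.symm,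
      Polynomial.eq_C_of_degree_eq_zero hdeg, Polynomial.homogenize_C]
    simp [hn]
  · obtain ⟨t, ht⟩ := IsAlgClosed.exists_root p hdeg
    refine ⟨![t, 1], by simp, ?_⟩
    have hv : ![t, 1] =
        fun i => Polynomial.aeval t ((![Polynomial.X, 1] : Fin 2 → Polynomial K) i) := by
      ext i; fin_cases i <;> simp
    rwa [hv, ← coe_aeval_eq_eval, RingHom.coe_coe, ← comp_aeval_apply, ← hp]

variable {F : R4} {a b : ℕ}

lemma exists_one_le_pointMult_fst (hF : IsBiForm F a b) (ha : a ≠ 0) (η : ProjLine) :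
    ∃ ξ, 1 ≤ pointMult (ξ, η) F := by
  let restriction : Fin 2 ⊕ Fin 2 → MvPolynomial (Fin 2) ℂ := Sum.elim X fun i => C (η.rep i)
  have hom : (bind₁ restriction F).IsHomogeneous a := by
    refine isWeightedHomogeneous_bind₁ (fun i => ?_) (isBiForm_iff.1 hF).1
    rcases i with i | i
    · exact isWeightedHomogeneous_X _ _ _
    · exact isWeightedHomogeneous_C _ _
  obtain ⟨ξ, hξ⟩ := exists_eval_rep_eq_zero hom ha
  have heval : (fun i => eval ξ.rep (restriction i)) = Sum.elim ξ.rep η.rep := by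
    ext (i | i) <;> simp [restriction]
  refine ⟨ξ, hF.one_le_pointMult_iff.2 ?_⟩
  rw [← heval, ← hξ]
  exact (eval₂Hom_bind₁ _ _ _ F).symm

lemma exists_one_le_pointMult_snd (hF : IsBiForm F a b) (hb : b ≠ 0) (ξ : ProjLine) :
    ∃ η, 1 ≤ pointMult (ξ, η) F := by
  let restriction : Fin 2 ⊕ Fin 2 → MvPolynomial (Fin 2) ℂ := Sum.elim (fun i => C (ξ.rep i)) X
  have hom : (bind₁ restriction F).IsHomogeneous b := by
    refine isWeightedHomogeneous_bind₁ (fun i => ?_) (isBiForm_iff.1 hF).2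
    rcases i with i | i
    · exact isWeightedHomogeneous_C _ _
    · exact isWeightedHomogeneous_X _ _ _
  obtain ⟨η, hη⟩ := exists_eval_rep_eq_zero hom hb
  have heval : (fun i => eval η.rep (restriction i)) = Sum.elim ξ.rep η.rep := by
    ext (i | i) <;> simp [restriction]
  refine ⟨η, hF.one_le_pointMult_iff.2 ?_⟩
  rw [← heval, ← hη]
  exact (eval₂Hom_bind₁ _ _ _ F).symm

lemma exists_card_eq_forall_one_le_pointMult (hF : IsBiForm F a b) (hb : b ≠ 0)
    (Z : Finset (ProjLine × ProjLine)) (n : ℕ) :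
    ∃ E, Disjoint Z E ∧ E.card = n ∧ ∀ P ∈ E, 1 ≤ pointMult P F := by
  classical
  choose η hη using exists_one_le_pointMult_snd hF hb
  obtain ⟨T, hTZ, hT⟩ := (Z.image Prod.fst).finite_toSet.infinite_compl.exists_subset_card_eq n
  refine ⟨T.image fun ξ => (ξ, η ξ), Finset.disjoint_right.2 ?_, ?_, ?_⟩
  · refine Finset.forall_mem_image.2 fun ξ hξ hZ => hTZ hξ ?_
    exact Finset.mem_coe.2 (Finset.mem_image_of_mem Prod.fst hZ)
  · rw [Finset.card_image_of_injective _ fun _ _ h => congrArg Prod.fst h, hT]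
  · exact Finset.forall_mem_image.2 fun ξ _ => hη ξ

end RationalPoints

section GenusBound

variable {Z : Finset (ProjLine × ProjLine)} {μ : ProjLine × ProjLine → ℕ} {G : R4} {a b : ℕ}

lemma exists_eqOn_of_disjoint {ι M : Type*} {s t : Finset ι} (h : Disjoint s t) (f g : ι → M) :
    ∃ k, Set.EqOn k f s ∧ Set.EqOn k g t := by
  classical
  exact ⟨s.piecewise f g, fun _ hi => s.piecewise_eq_of_mem _ _ hi,
    fun _ hi => s.piecewise_eq_of_notMem _ _ (Finset.disjoint_right.1 h hi)⟩

lemma sub_one_add_one_choose_two (n : ℕ) : (n - 1 + 1).choose 2 = n.choose 2 := by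
  cases n <;> rfl

lemma two_mul_choose_two (n : ℕ) : 2 * n.choose 2 = n * (n - 1) := by
  rw [Nat.choose_two_right, Nat.mul_div_cancel' (Nat.even_mul_pred_self n).two_dvd]

/-- Intersect `G` with a curve of multiplicity at least `μ P - 1` at every `P ∈ Z` passing through
as many further points of `G` as a dimension count allows; this bounds the `δ`-invariant of `G` by
its arithmetic genus `(a - 1) * (b - 1)`. -/
lemma sum_choose_two_add_le (hG : IsBiForm G a b) (ha : a ≠ 0) (hb : b ≠ 0) (hirr : Irreducible G)
    (hμ : ∀ P ∈ Z, μ P ≤ pointMult P G) :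
    ∑ P ∈ Z, (μ P).choose 2 + a + b ≤ a * b + 1 := by
  classical
  set δ := ∑ P ∈ Z, (μ P).choose 2
  obtain ⟨a, rfl⟩ := Nat.exists_eq_add_one_of_ne_zero ha
  obtain ⟨E, hZE, hcard, hE⟩ := exists_card_eq_forall_one_le_pointMult hG hb Z (a * (δ + 1))
  obtain ⟨μ', hμ'Z, hμ'E⟩ := exists_eqOn_of_disjoint hZE μ fun _ => 1
  obtain ⟨κ, hκZ, hκE⟩ := exists_eqOn_of_disjoint hZE (fun P => μ P - 1) fun _ => 1
  have hκ : ∑ P ∈ Z ∪ E, (κ P + 1).choose 2 = δ + E.card := by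
    rw [Finset.sum_union hZE, Finset.card_eq_sum_ones]
    congr 1 <;> refine Finset.sum_congr rfl fun P hP => ?_
    · simp only [hκZ hP, sub_one_add_one_choose_two]
    · simp only [hκE hP, one_add_one_eq_two, Nat.choose_self]
  have hμκ : ∑ P ∈ Z ∪ E, μ' P * κ P = 2 * δ + E.card := by
    rw [Finset.sum_union hZE, Finset.card_eq_sum_ones, Finset.mul_sum]
    congr 1 <;> refine Finset.sum_congr rfl fun P hP => ?_
    · simp only [hμ'Z hP, hκZ hP, two_mul_choose_two]
    · simp only [hμ'E hP, hκE hP, mul_one]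
  obtain ⟨H, hH0, hH, hHκ⟩ := exists_ne_zero_of_sum_choose_lt (p := a) (q := δ)
    (show ∑ P ∈ Z ∪ E, (κ P + 1).choose 2 < _ by rw [hκ, hcard]; linarith)
  have hdvd : ¬G ∣ H := fun hdvd => by
    simpa using (hG.le_of_dvd hH hH0 hdvd).1
  have hμ' : ∀ P ∈ Z ∪ E, μ' P ≤ pointMult P G := fun P hP => by
    rcases Finset.mem_union.1 hP with hP | hP
    · simpa only [hμ'Z hP] using hμ P hP
    · simpa only [hμ'E hP, Nat.cast_one] using hE P hP
  have hbezout := sum_mul_le_of_not_dvd hG hH hirr hdvd hμ' hHκ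
  rw [hμκ, hcard] at hbezout
  linarith

end GenusBound

section Adjoint

variable {G : R4} {a b : ℕ}

/-- `K` is an adjoint curve of `G`. It exists because the genus bound leaves fewer conditions on
`K` than there are forms of bidegree `(a - 2, b - 1)` or `(a - 1, b - 2)`. -/
lemma exists_pointMult_le_add_one (hG : IsBiForm G a b) (ha : a ≠ 0) (hb : b ≠ 0)
    (hab : 3 ≤ a + b) (hirr : Irreducible G) (Z : Finset (ProjLine × ProjLine)) :
    ∃ K ≠ 0, ∃ c d, IsBiForm K c d ∧ c + d + 3 = a + b ∧
      ∀ P ∈ Z, pointMult P G ≤ pointMult P K + 1 := by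
  have hcoe (P : ProjLine × ProjLine) : ((pointMult P G).toNat : ℕ∞) = pointMult P G :=
    ENat.natCast_toNat <|
      ne_top_of_le_ne_top (ENat.natCast_ne_top _) (hG.pointMult_le hirr.ne_zero P)
  have hgenus := sum_choose_two_add_le (Z := Z) hG ha hb hirr fun P _ => (hcoe P).le
  obtain ⟨c, d, hcd, hlt⟩ :
      ∃ c d, c + d + 3 = a + b ∧ a * b + 1 < a + b + (c + 1) * (d + 1) := by
    obtain ⟨a, rfl⟩ := Nat.exists_eq_add_one_of_ne_zero ha
    obtain ⟨b, rfl⟩ := Nat.exists_eq_add_one_of_ne_zero hb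
    rcases a with - | a
    · exact ⟨0, b - 1, by lia, by lia⟩
    · exact ⟨a, b, by lia, by linarith⟩
  obtain ⟨K, hK0, hK, hKG⟩ := exists_ne_zero_of_sum_choose_lt (Z := Z) (p := c) (q := d)
    (ν := fun P => (pointMult P G).toNat - 1) (by
      simp only [sub_one_add_one_choose_two]
      lia)
  refine ⟨K, hK0, c, d, hK, hcd, fun P hP => ?_⟩
  calc pointMult P G = (pointMult P G).toNat := (hcoe P).symm
    _ ≤ ((pointMult P G).toNat - 1 : ℕ) + 1 := by exact_mod_cast le_tsub_add
    _ ≤ pointMult P K + 1 := by gcongr; exact hKG P hP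

end Adjoint

section InitialDegree

variable {Z : Finset (ProjLine × ProjLine)} {F G K : R4}
  {a b c d m p q : ℕ}

lemma mem_symbPow_iff : F ∈ symbPow Z m ↔ ∀ P ∈ Z, m ≤ pointMult P F := by
  simp [symbPow, mem_pointIdeal_pow_iff]

lemma alphaPlus_le {J : Ideal R4} (hF : F ∈ J) (h0 : F ≠ 0) (hbi : IsBiForm F p q) :
    alphaPlus J ≤ p + q :=
  Nat.sInf_le ⟨p, q, rfl, F, hF, h0, hbi⟩

/-- Compare `F` with the form `(F / G) * K`, which lies in `I^{(m)}`. -/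
lemma alphaPlus_symbPow_add_le (hF : F ∈ symbPow Z (m + 1)) (hF0 : F ≠ 0) (hbi : IsBiForm F p q)
    (hdvd : G ∣ F) (hG : IsBiForm G a b) (hK0 : K ≠ 0) (hK : IsBiForm K c d)
    (hGK : ∀ P ∈ Z, pointMult P G ≤ pointMult P K + 1) :
    alphaPlus (symbPow Z m) + (a + b) ≤ p + q + (c + d) := by
  obtain ⟨H, rfl⟩ := hdvd
  obtain ⟨a', b', a'', b'', ha, hb, hG', hH⟩ := hbi.exists_of_mul hF0
  obtain ⟨rfl, rfl⟩ := hG.unique hG' (left_ne_zero_of_mul hF0)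
  have hKH : K * H ∈ symbPow Z m := mem_symbPow_iff.2 fun P hP => by
    have hGH := mem_symbPow_iff.1 hF P hP
    rw [pointMult_mul, Nat.cast_add, Nat.cast_one] at hGH
    rw [pointMult_mul]
    refine (ENat.add_le_add_iff_right ENat.one_ne_top).1 (hGH.trans ?_)
    rw [add_right_comm]
    gcongr
    exact hGK P hP
  have := alphaPlus_le hKH (mul_ne_zero hK0 (right_ne_zero_of_mul hF0)) (hK.mul hH)
  lia

lemma alphaPlus_symbPow_add_three_le (hF : F ∈ symbPow Z (m + 1)) (hF0 : F ≠ 0)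
    (hbi : IsBiForm F p q) (hdvd : G ∣ F) (hG : IsBiForm G a b) (ha : a ≠ 0) (hb : b ≠ 0)
    (hab : 3 ≤ a + b) (hirr : Irreducible G) : alphaPlus (symbPow Z m) + 3 ≤ p + q := by
  obtain ⟨K, hK0, c, d, hK, hcd, hGK⟩ := exists_pointMult_le_add_one hG ha hb hab hirr Z
  have := alphaPlus_symbPow_add_le hF hF0 hbi hdvd hG hK0 hK hGK
  lia

end InitialDegree

section Lines

variable {Z : Finset (ProjLine × ProjLine)} {P : ProjLine × ProjLine} {F G H : R4}
  {a b c d m p q : ℕ}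

lemma IsBiForm.dvd_of_one_le_pointMult (hG : IsBiForm G a b) (hH : IsBiForm H c d)
    (hirr : Irreducible G) (hdeg : a * d + b * c = 0) (hGP : 1 ≤ pointMult P G)
    (hHP : 1 ≤ pointMult P H) : G ∣ H := by
  by_contra hdvd
  have := sum_mul_le_of_not_dvd (Z := {P}) (μ := 1) (κ := 1) hG hH hirr hdvd
    (by simpa using hGP) (by simpa using hHP)
  simp [hdeg] at this

lemma IsBiForm.eq_one_of_irreducible_fst (hG : IsBiForm G a 0) (hirr : Irreducible G) :
    a = 1 := by
  have ha : a ≠ 0 := by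
    rintro rfl
    exact hirr.not_isUnit (hG.isUnit hirr.ne_zero)
  obtain ⟨η⟩ : Nonempty ProjLine := inferInstance
  obtain ⟨ξ, hξ⟩ := exists_one_le_pointMult_fst hG ha η
  have hdvd : G ∣ fstFiber ξ := hG.dvd_of_one_le_pointMult (isBiForm_fstFiber ξ) hirr (by simp) hξ
    (one_le_pointMult_fstFiber (ξ, η))
  have := (hG.le_of_dvd (isBiForm_fstFiber ξ) (fstFiber_ne_zero ξ) hdvd).1
  lia

lemma IsBiForm.eq_one_of_irreducible_snd (hG : IsBiForm G 0 b) (hirr : Irreducible G) :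
    b = 1 := by
  have hb : b ≠ 0 := by
    rintro rfl
    exact hirr.not_isUnit (hG.isUnit hirr.ne_zero)
  obtain ⟨ξ⟩ : Nonempty ProjLine := inferInstance
  obtain ⟨η, hη⟩ := exists_one_le_pointMult_snd hG hb ξ
  have hdvd : G ∣ sndFiber η := hG.dvd_of_one_le_pointMult (isBiForm_sndFiber η) hirr (by simp) hη
    (one_le_pointMult_sndFiber (ξ, η))
  have := (hG.le_of_dvd (isBiForm_sndFiber η) (sndFiber_ne_zero η) hdvd).2
  lia

lemma isBiForm_of_irreducible_of_dvd (hF : F ∈ symbPow Z (m + 1)) (hF0 : F ≠ 0)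
    (hbi : IsBiForm F p q) (hdeg : p + q ≤ alphaPlus (symbPow Z m) + 2) (hirr : Irreducible G)
    (hdvd : G ∣ F) : IsBiForm G 1 0 ∨ IsBiForm G 0 1 ∨ IsBiForm G 1 1 := by
  obtain ⟨H, hGH⟩ := hdvd
  obtain ⟨a, b, -, -, -, -, hG, -⟩ := (hGH ▸ hbi).exists_of_mul (hGH ▸ hF0)
  rcases eq_or_ne b 0 with rfl | hb
  · exact .inl (hG.eq_one_of_irreducible_fst hirr ▸ hG)
  rcases eq_or_ne a 0 with rfl | ha
  · exact .inr (.inl (hG.eq_one_of_irreducible_snd hirr ▸ hG))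
  have hab : a + b < 3 := by
    by_contra! hab
    have := alphaPlus_symbPow_add_three_le hF hF0 hbi ⟨H, hGH⟩ hG ha hb hab hirr
    lia
  obtain ⟨rfl, rfl⟩ : a = 1 ∧ b = 1 := by lia
  exact .inr (.inr hG)

lemma pointMult_prod (P : ProjLine × ProjLine) (s : Finset R4) :
    pointMult P (∏ G ∈ s, G) = ∑ G ∈ s, pointMult P G := by
  classical
  induction s using Finset.induction_on with
  | empty => simp [pointMult_one]
  | insert G s hG ih => rw [Finset.prod_insert hG, Finset.sum_insert hG, pointMult_mul, ih]

lemma pointMult_prod_le_one {s : Finset R4} (hle : ∀ G ∈ s, pointMult P G ≤ 1)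
    (huniq : ∀ G ∈ s, ∀ H ∈ s, 1 ≤ pointMult P G → 1 ≤ pointMult P H → G = H) :
    pointMult P (∏ G ∈ s, G) ≤ 1 := by
  rw [pointMult_prod]
  by_cases h : ∃ G ∈ s, 1 ≤ pointMult P G
  · obtain ⟨G, hG, hGP⟩ := h
    rw [Finset.sum_eq_single_of_mem G hG fun H hH hHG => ?_]
    · exact hle G hG
    · exact Order.lt_one_iff.1 (not_le.1 fun hHP => hHG (huniq H hH G hG hHP hGP))
  · push Not at h
    rw [Finset.sum_eq_zero fun G hG => Order.lt_one_iff.1 (h G hG)]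
    exact zero_le_one

lemma isBiForm_prod {s : Finset R4} (h : ∀ G ∈ s, IsBiForm G a b) :
    IsBiForm (∏ G ∈ s, G) (s.card * a) (s.card * b) := by
  simpa [IsBiForm] using IsWeightedHomogeneous.prod s (fun G => G) (fun _ => (a, b)) h

/-- Two lines of the same ruling do not meet, so no point of `Z` lies on more than one of them and
they can all be dropped at once. -/
lemma alphaPlus_symbPow_add_card_le (hF : F ∈ symbPow Z (m + 1)) (hF0 : F ≠ 0)
    (hbi : IsBiForm F p q) (hab : a + b = 1) {s : Finset R4}
    (hs : ∀ G ∈ s, Irreducible G ∧ G ∣ F ∧ IsBiForm G a b)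
    (hassoc : (s : Set R4).Pairwise fun G H => ¬Associated G H) :
    alphaPlus (symbPow Z m) + s.card ≤ p + q := by
  have heq : ∀ G ∈ s, ∀ H ∈ s, G ∣ H → G = H := fun G hG H hH hGH =>
    hassoc.eq hG hH (not_not.2 ((hs G hG).1.associated_of_dvd (hs H hH).1 hGH))
  have hdvd : ∏ G ∈ s, G ∣ F :=
    Finset.prod_dvd_of_isRelPrime
      (fun G hG H hH hne => (hs G hG).1.isRelPrime_iff_not_dvd.2 (hne ∘ heq G hG H hH))
      fun G hG => (hs G hG).2.1
  have hmult (P : ProjLine × ProjLine) : pointMult P (∏ G ∈ s, G) ≤ 1 := by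
    refine pointMult_prod_le_one (fun G hG => ?_) fun G hG H hH hGP hHP => heq G hG H hH ?_
    · simpa [hab] using (hs G hG).2.2.pointMult_le (hs G hG).1.ne_zero P
    · refine (hs G hG).2.2.dvd_of_one_le_pointMult (hs H hH).2.2 (hs G hG).1 ?_ hGP hHP
      rcases Nat.add_eq_one_iff.1 hab with ⟨rfl, rfl⟩ | ⟨rfl, rfl⟩ <;> rfl
  have := alphaPlus_symbPow_add_le hF hF0 hbi hdvd (isBiForm_prod fun G hG => (hs G hG).2.2)
    one_ne_zero (isWeightedHomogeneous_one ℂ biWeight) fun P _ => by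
      simpa [pointMult_one] using hmult P
  rwa [← mul_add, hab, mul_one, add_zero, add_zero] at this

lemma associated_of_three_lines (hF : F ∈ symbPow Z (m + 1)) (hF0 : F ≠ 0) (hbi : IsBiForm F p q)
    (hdeg : p + q ≤ alphaPlus (symbPow Z m) + 2) (hab : a + b = 1) {G₁ G₂ G₃ : R4}
    (h₁ : Irreducible G₁ ∧ G₁ ∣ F ∧ IsBiForm G₁ a b)
    (h₂ : Irreducible G₂ ∧ G₂ ∣ F ∧ IsBiForm G₂ a b)
    (h₃ : Irreducible G₃ ∧ G₃ ∣ F ∧ IsBiForm G₃ a b) :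
    Associated G₁ G₂ ∨ Associated G₁ G₃ ∨ Associated G₂ G₃ := by
  classical
  by_contra! ⟨h₁₂, h₁₃, h₂₃⟩
  have hcard : Finset.card {G₁, G₂, G₃} = 3 :=
    Finset.card_eq_three.2 ⟨G₁, G₂, G₃, fun h => h₁₂ (h ▸ .rfl), fun h => h₁₃ (h ▸ .rfl),
      fun h => h₂₃ (h ▸ .rfl), rfl⟩
  have := alphaPlus_symbPow_add_card_le hF hF0 hbi hab (s := {G₁, G₂, G₃})
    (by simp [h₁, h₂, h₃])
    (by simp [Set.pairwise_insert, h₁₂, h₁₃, h₂₃, mt Associated.symm])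
  lia

end Lines

theorem alphaPlus_jump_two_components_general {Z : Finset (ProjLine × ProjLine)} {m : ℕ}
    {F : R4} (hFmem : F ∈ symbPow Z (m + 1)) (hF0 : F ≠ 0) {p q : ℕ} (hFform : IsBiForm F p q)
    (hdeg : p + q ≤ alphaPlus (symbPow Z m) + 2) :
    (∀ G : R4, Irreducible G → G ∣ F →
        IsBiForm G 1 0 ∨ IsBiForm G 0 1 ∨ IsBiForm G 1 1) ∧
    (∀ G₁ G₂ G₃ : R4,
        Irreducible G₁ → G₁ ∣ F → IsBiForm G₁ 1 0 →
        Irreducible G₂ → G₂ ∣ F → IsBiForm G₂ 1 0 →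
        Irreducible G₃ → G₃ ∣ F → IsBiForm G₃ 1 0 →
        Associated G₁ G₂ ∨ Associated G₁ G₃ ∨ Associated G₂ G₃) ∧
    (∀ G₁ G₂ G₃ : R4,
        Irreducible G₁ → G₁ ∣ F → IsBiForm G₁ 0 1 →
        Irreducible G₂ → G₂ ∣ F → IsBiForm G₂ 0 1 →
        Irreducible G₃ → G₃ ∣ F → IsBiForm G₃ 0 1 →
        Associated G₁ G₂ ∨ Associated G₁ G₃ ∨ Associated G₂ G₃) :=
  ⟨fun _ hG hdvd => isBiForm_of_irreducible_of_dvd hFmem hF0 hFform hdeg hG hdvd,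
    fun _ _ _ h₁ hd₁ hb₁ h₂ hd₂ hb₂ h₃ hd₃ hb₃ =>
      associated_of_three_lines hFmem hF0 hFform hdeg rfl ⟨h₁, hd₁, hb₁⟩ ⟨h₂, hd₂, hb₂⟩
        ⟨h₃, hd₃, hb₃⟩,
    fun _ _ _ h₁ hd₁ hb₁ h₂ hd₂ hb₂ h₃ hd₃ hb₃ =>
      associated_of_three_lines hFmem hF0 hFform hdeg rfl ⟨h₁, hd₁, hb₁⟩ ⟨h₂, hd₂, hb₂⟩
        ⟨h₃, hd₃, hb₃⟩⟩

/-- Suppose `α⁺(I^{(m+1)}) = α⁺(I^{(m)}) + 2` for the radical ideal `I` of a finite set `Z`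
of distinct points of `ℙ¹ × ℙ¹` and some `m ≥ 1`, and let `F ∈ I^{(m+1)}` be a nonzero form
of bidegree `(p,q)` with `p + q = α⁺(I^{(m+1)})`.  Then every irreducible factor of `F` is a
form of bidegree `(1,0)`, `(0,1)` or `(1,1)`; moreover `F` has at most two distinct (i.e.
pairwise non-associated) irreducible factors of bidegree `(1,0)`, and at most two of
bidegree `(0,1)`. -/
theorem alphaPlus_jump_two_components (Z : Finset (ProjLine × ProjLine)) (m : ℕ) (hm : 1 ≤ m)
    (h : alphaPlus (symbPow Z (m + 1)) = alphaPlus (symbPow Z m) + 2)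
    (F : R4) (hFmem : F ∈ symbPow Z (m + 1)) (hF0 : F ≠ 0)
    (p q : ℕ) (hFform : IsBiForm F p q) (hdeg : p + q = alphaPlus (symbPow Z (m + 1))) :
    (∀ G : R4, Irreducible G → G ∣ F →
        IsBiForm G 1 0 ∨ IsBiForm G 0 1 ∨ IsBiForm G 1 1) ∧
    (∀ G₁ G₂ G₃ : R4,
        Irreducible G₁ → G₁ ∣ F → IsBiForm G₁ 1 0 →
        Irreducible G₂ → G₂ ∣ F → IsBiForm G₂ 1 0 →
        Irreducible G₃ → G₃ ∣ F → IsBiForm G₃ 1 0 →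
        Associated G₁ G₂ ∨ Associated G₁ G₃ ∨ Associated G₂ G₃) ∧
    (∀ G₁ G₂ G₃ : R4,
        Irreducible G₁ → G₁ ∣ F → IsBiForm G₁ 0 1 →
        Irreducible G₂ → G₂ ∣ F → IsBiForm G₂ 0 1 →
        Irreducible G₃ → G₃ ∣ F → IsBiForm G₃ 0 1 →
        Associated G₁ G₂ ∨ Associated G₁ G₃ ∨ Associated G₂ G₃) :=
  alphaPlus_jump_two_components_general hFmem hF0 hFform (hdeg.trans h).le
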